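/- arXiv:2204.09984 — 3 statements merged into one kernel-verified Lean document; each statement's English description precedes it below -/
import Mathlib

section
/- Let ψ be a balanced N-function with characteristics (γ₁, γ₂). Then the conjugate N-function ψ* is again a balanced N-function; more precisely, ψ* is C¹ on [0,∞) and C² on (0,∞) with (ψ*)''(t) > 0 for all t > 0, and (1/γ₂)·(ψ*)'(t) ≤ t·(ψ*)''(t) ≤ (1/γ₁)·(ψ*)'(t) for all t > 0. -/
open Real Filter Set Topology

noncomputable section

/-- An N-function: convex on `[0,∞)`, vanishing at `0`, positive on `(0,∞)`,
with `ψ t / t → 0` as `t → 0⁺` and `ψ t / t → ∞` as `t → ∞`. -/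
def IsNFunction (ψ : ℝ → ℝ) : Prop :=
  ConvexOn ℝ (Set.Ici 0) ψ ∧ ψ 0 = 0 ∧ (∀ t > 0, 0 < ψ t) ∧
    Filter.Tendsto (fun t => ψ t / t) (nhdsWithin 0 (Set.Ioi 0)) (nhds 0) ∧
    Filter.Tendsto (fun t => ψ t / t) Filter.atTop Filter.atTop

/-- A regular N-function: an N-function which is `C¹` on `[0,∞)`, `C²` on `(0,∞)`,
with `ψ'' t > 0` for all `t > 0`. -/
def IsRegularNFunction (ψ : ℝ → ℝ) : Prop :=
  IsNFunction ψ ∧ ContDiffOn ℝ 1 ψ (Set.Ici 0) ∧ ContDiffOn ℝ 2 ψ (Set.Ioi 0) ∧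
    ∀ t > 0, 0 < deriv (deriv ψ) t

/-- A balanced N-function with characteristics `(γ₁, γ₂)`. -/
def IsBalancedNFunction (ψ : ℝ → ℝ) (γ₁ γ₂ : ℝ) : Prop :=
  IsRegularNFunction ψ ∧ 0 < γ₁ ∧ γ₁ ≤ 1 ∧ 1 ≤ γ₂ ∧
    ∀ t > 0, γ₁ * deriv ψ t ≤ t * deriv (deriv ψ) t ∧
      t * deriv (deriv ψ) t ≤ γ₂ * deriv ψ t

/-- The conjugate N-function `ψ*(t) = sup_{s ≥ 0} (s·t − ψ(s))`. -/
def conjNF (ψ : ℝ → ℝ) (t : ℝ) : ℝ :=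
  ⨆ s : Set.Ici (0:ℝ), ((s : ℝ) * t - ψ s)

/-- `ψ` satisfies the Δ₂-condition with constant `K`. -/
def SatisfiesDelta2 (ψ : ℝ → ℝ) (K : ℝ) : Prop :=
  2 < K ∧ ∀ t ≥ (0:ℝ), ψ (2 * t) ≤ K * ψ t

/-- The derivative `ψ'_a(t) = ψ'(a+t)·t/(a+t)` of the shifted N-function. -/
def shiftDF (ψ : ℝ → ℝ) (a t : ℝ) : ℝ := deriv ψ (a + t) * t / (a + t)

/-- The shifted N-function `ψ_a(t) = ∫₀ᵗ ψ'(a+s)·s/(a+s) ds`. -/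
def shiftNF (ψ : ℝ → ℝ) (a t : ℝ) : ℝ := ∫ s in (0:ℝ)..t, shiftDF ψ a s

/-- Frobenius norm of a `d×n` real matrix. -/
def frobNorm {d n : ℕ} (P : Fin d → Fin n → ℝ) : ℝ :=
  Real.sqrt (∑ i : Fin d, ∑ j : Fin n, (P i j) ^ 2)

/-- Frobenius inner product `P : Q` of two `d×n` real matrices. -/
def frobInner {d n : ℕ} (P Q : Fin d → Fin n → ℝ) : ℝ :=
  ∑ i : Fin d, ∑ j : Fin n, P i j * Q i j

/-- `F(P) = √(φ'(|P|)/|P|)·P` (equal to `0` at `P = 0`). -/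
def FmapNF (φ : ℝ → ℝ) {d n : ℕ} (P : Fin d → Fin n → ℝ) : Fin d → Fin n → ℝ :=
  Real.sqrt (deriv φ (frobNorm P) / frobNorm P) • P

/-- `F*(P) = √((φ*)'(|P|)/|P|)·P` (equal to `0` at `P = 0`). -/
def FstarNF (φ : ℝ → ℝ) {d n : ℕ} (P : Fin d → Fin n → ℝ) : Fin d → Fin n → ℝ :=
  Real.sqrt (deriv (conjNF φ) (frobNorm P) / frobNorm P) • P

/-- The standard basis matrix with a `1` in entry `(k,l)`. -/
def basisMat {d n : ℕ} (k : Fin d) (l : Fin n) : Fin d → Fin n → ℝ :=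
  fun i j => if i = k ∧ j = l then 1 else 0

/-- `𝒜` has `φ`-structure with constants `(γ₃, γ₄)`. -/
def HasPhiStructure {d n : ℕ} (A : (Fin d → Fin n → ℝ) → (Fin d → Fin n → ℝ))
    (φ : ℝ → ℝ) (γ₃ γ₄ : ℝ) : Prop :=
  0 < γ₃ ∧ γ₃ ≤ 1 ∧ 1 < γ₄ ∧ Continuous A ∧
    ContDiffOn ℝ 1 A {P | P ≠ 0} ∧ A 0 = 0 ∧
    (∀ P : Fin d → Fin n → ℝ, P ≠ 0 → ∀ Q : Fin d → Fin n → ℝ,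
      γ₃ * (deriv φ (frobNorm P) / frobNorm P) * (frobNorm Q) ^ 2 ≤
        ∑ i : Fin d, ∑ j : Fin n, ∑ k : Fin d, ∑ l : Fin n,
          fderiv ℝ A P (basisMat k l) i j * Q i j * Q k l) ∧
    (∀ P : Fin d → Fin n → ℝ, P ≠ 0 → ∀ (i k : Fin d) (j l : Fin n),
      |fderiv ℝ A P (basisMat k l) i j| ≤ γ₄ * (deriv φ (frobNorm P) / frobNorm P))

/-!
The supremum defining `ψ*(t)` is attained at `s = (ψ')⁻¹(t)`, so this `s` is a subgradient of
`ψ*` at `t`. A subgradient depending continuously on the point is a derivative; hence `(ψ*)' =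
(ψ')⁻¹`, and the inverse function rule gives `(ψ*)''(t) = 1 / ψ''(s)`. With `t = ψ'(s)`, the two
bounds on `s ψ''(s) / ψ'(s)` become bounds on its reciprocal `t (ψ*)''(t) / (ψ*)'(t)`.
-/

theorem add_mul_sub_le_of_convexOn_of_hasDerivWithinAt {S : Set ℝ} {f : ℝ → ℝ} {f' x y : ℝ}
    (hf : ConvexOn ℝ S f) (hx : x ∈ S) (hy : y ∈ S) (hf' : HasDerivWithinAt f f' S x) :
    f x + f' * (y - x) ≤ f y := by
  rcases lt_trichotomy x y with hxy | rfl | hyx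
  · have := hf.le_slope_of_hasDerivWithinAt hx hy hxy hf'
    rw [slope_def_field, le_div_iff₀ (sub_pos.2 hxy)] at this
    linarith
  · simp
  · have := hf.slope_le_of_hasDerivWithinAt hy hx hyx hf'
    rw [slope_def_field, div_le_iff₀ (sub_pos.2 hyx)] at this
    linarith

theorem hasFDerivAt_of_continuousAt_subgradient {E : Type*} [NormedAddCommGroup E]
    [NormedSpace ℝ E] {g : E → ℝ} {L : E → E →L[ℝ] ℝ} {x : E}
    (hg : ∀ u v, g u + L u (v - u) ≤ g v) (hL : ContinuousAt L x) : HasFDerivAt g (L x) x := by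
  refine .of_isLittleO (Asymptotics.isLittleO_iff.2 fun c hc ↦ ?_)
  filter_upwards [Metric.continuousAt_iff'.1 hL c hc] with v hv
  have hlower : 0 ≤ g v - g x - L x (v - x) := by linarith [hg x v]
  have hupper : g v - g x - L x (v - x) ≤ (L v - L x) (v - x) := by
    have := hg v x
    rw [← neg_sub v x, map_neg] at this
    rw [sub_apply]
    linarith
  calc ‖g v - g x - L x (v - x)‖ = g v - g x - L x (v - x) := Real.norm_of_nonneg hlower
    _ ≤ ‖(L v - L x) (v - x)‖ := hupper.trans (le_abs_self _)
    _ ≤ ‖L v - L x‖ * ‖v - x‖ := (L v - L x).le_opNorm _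
    _ ≤ c * ‖v - x‖ := by gcongr; exact (dist_eq_norm (L v) (L x) ▸ hv).le

section NormedField

variable {𝕜 F : Type*} [NontriviallyNormedField 𝕜] [NormedAddCommGroup F] [NormedSpace 𝕜 F]
  {f : 𝕜 → F} {s : Set 𝕜}

theorem derivWithin_eventuallyEq_deriv {x : 𝕜} (hs : s ∈ 𝓝 x) : derivWithin f s =ᶠ[𝓝 x] deriv f :=
  (eventually_mem_nhds_iff.2 hs).mono fun _ ↦ derivWithin_of_mem_nhds

theorem contDiffOn_succ_of_hasDerivAt {f' : 𝕜 → F} {n : ℕ∞} (hs : IsOpen s)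
    (hf : ∀ x ∈ s, HasDerivAt f (f' x) x) (hf' : ContDiffOn 𝕜 n f' s) :
    ContDiffOn 𝕜 (n + 1) f s :=
  (contDiffOn_succ_iff_deriv_of_isOpen hs).2
    ⟨fun x hx ↦ (hf x hx).differentiableAt.differentiableWithinAt, by simp,
      hf'.congr fun x hx ↦ (hf x hx).deriv⟩

end NormedField

section Conjugate

variable {ψ : ℝ → ℝ}

theorem mul_sub_le_conjNF {s t : ℝ}
    (hbdd : BddAbove (range fun r : Ici (0 : ℝ) ↦ (r : ℝ) * t - ψ r)) (hs : 0 ≤ s) :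
    s * t - ψ s ≤ conjNF ψ t :=
  le_ciSup (f := fun s : Ici (0 : ℝ) ↦ (s : ℝ) * t - ψ s) hbdd ⟨s, hs⟩

theorem conjNF_le {t M : ℝ} (hM : ∀ s ≥ 0, s * t - ψ s ≤ M) : conjNF ψ t ≤ M :=
  ciSup_le fun s ↦ hM s s.2

theorem conjNF_eq_of_isMaxOn {a t : ℝ} (ha : 0 ≤ a)
    (hmax : IsMaxOn (fun s ↦ s * t - ψ s) (Ici 0) a) : conjNF ψ t = a * t - ψ a :=
  le_antisymm (conjNF_le fun _ hs ↦ hmax hs)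
    (mul_sub_le_conjNF ⟨a * t - ψ a, by rintro _ ⟨s, rfl⟩; exact hmax s.2⟩ ha)

theorem convexOn_conjNF {S : Set ℝ} (hS : Convex ℝ S)
    (hbdd : ∀ t ∈ S, BddAbove (range fun r : Ici (0 : ℝ) ↦ (r : ℝ) * t - ψ r)) :
    ConvexOn ℝ S (conjNF ψ) := by
  refine ⟨hS, fun x hx y hy a b ha hb hab ↦ conjNF_le fun s hs ↦ ?_⟩
  calc s * (a • x + b • y) - ψ s
      = a * (s * x - ψ s) + b * (s * y - ψ s) := by
        simp only [smul_eq_mul]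
        linear_combination ψ s * hab
    _ ≤ a * conjNF ψ x + b * conjNF ψ y := by
        gcongr
        · exact mul_sub_le_conjNF (hbdd x hx) hs
        · exact mul_sub_le_conjNF (hbdd y hy) hs

theorem tendsto_conjNF_div_atTop
    (hbdd : ∀ᶠ t in atTop, BddAbove (range fun r : Ici (0 : ℝ) ↦ (r : ℝ) * t - ψ r)) :
    Tendsto (fun t ↦ conjNF ψ t / t) atTop atTop := by
  refine tendsto_atTop.2 fun M ↦ ?_
  have hs : 0 ≤ |M| + 1 := by positivity
  filter_upwards [hbdd, eventually_gt_atTop 0, eventually_ge_atTop (ψ (|M| + 1))] with t ht ht0 htψ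
  rw [le_div_iff₀ ht0]
  have hyoung := mul_sub_le_conjNF ht hs
  have hM : M * t ≤ |M| * t := by gcongr; exact le_abs_self M
  linarith

end Conjugate

namespace IsNFunction

variable {ψ : ℝ → ℝ}

theorem convexOn (h : IsNFunction ψ) : ConvexOn ℝ (Ici 0) ψ := h.1

theorem map_zero (h : IsNFunction ψ) : ψ 0 = 0 := h.2.1

theorem pos (h : IsNFunction ψ) {s : ℝ} (hs : 0 < s) : 0 < ψ s := h.2.2.1 s hs

theorem tendsto_div_zero (h : IsNFunction ψ) : Tendsto (fun s ↦ ψ s / s) (𝓝[>] 0) (𝓝 0) :=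
  h.2.2.2.1

theorem tendsto_div_atTop (h : IsNFunction ψ) : Tendsto (fun s ↦ ψ s / s) atTop atTop :=
  h.2.2.2.2

theorem nonneg (h : IsNFunction ψ) {s : ℝ} (hs : 0 ≤ s) : 0 ≤ ψ s := by
  rcases hs.eq_or_lt with rfl | hs
  · exact h.map_zero.ge
  · exact (h.pos hs).le

theorem mul_div_le (h : IsNFunction ψ) {r s : ℝ} (hr : 0 < r) (hrs : r ≤ s) :
    s * (ψ r / r) ≤ ψ s := by
  have hs := hr.trans_le hrs
  have := h.convexOn.secant_mono self_mem_Ici hr.le hs.le hr.ne' hs.ne' hrs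
  rw [h.map_zero, sub_zero, sub_zero, sub_zero, sub_zero, le_div_iff₀ hs] at this
  linarith

theorem mul_sub_le_mul_abs (h : IsNFunction ψ) {r s t : ℝ} (hr : 0 < r) (hs : 0 ≤ s)
    (htr : t ≤ ψ r / r) : s * t - ψ s ≤ r * |t| := by
  rcases le_total s r with hsr | hrs
  · calc s * t - ψ s ≤ s * t := sub_le_self _ (h.nonneg hs)
      _ ≤ s * |t| := by gcongr; exact le_abs_self t
      _ ≤ r * |t| := by gcongr
  · calc s * t - ψ s ≤ s * (ψ r / r) - ψ s := by gcongr
      _ ≤ 0 := sub_nonpos.2 (h.mul_div_le hr hrs)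
      _ ≤ r * |t| := by positivity

theorem bddAbove_range_mul_sub (h : IsNFunction ψ) (t : ℝ) :
    BddAbove (range fun r : Ici (0 : ℝ) ↦ (r : ℝ) * t - ψ r) := by
  obtain ⟨R, hRt, hR⟩ :=
    ((h.tendsto_div_atTop.eventually_ge_atTop t).and (eventually_gt_atTop 0)).exists
  exact ⟨R * |t|, forall_mem_range.2 fun s ↦ h.mul_sub_le_mul_abs hR s.2 hRt⟩

theorem conj_of_nonpos (h : IsNFunction ψ) {t : ℝ} (ht : t ≤ 0) : conjNF ψ t = 0 := by
  have hmax : IsMaxOn (fun s ↦ s * t - ψ s) (Ici 0) 0 := fun s (hs : 0 ≤ s) ↦ by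
    have := mul_nonpos_of_nonneg_of_nonpos hs ht
    simp only [mem_ofPred_eq, zero_mul, h.map_zero]
    linarith [h.nonneg hs]
  rw [conjNF_eq_of_isMaxOn le_rfl hmax, h.map_zero, zero_mul, sub_zero]

theorem conj_pos (h : IsNFunction ψ) {t : ℝ} (ht : 0 < t) : 0 < conjNF ψ t := by
  obtain ⟨s, hst, hs : 0 < s⟩ :=
    ((h.tendsto_div_zero.eventually_lt_const ht).and self_mem_nhdsWithin).exists
  rw [div_lt_iff₀' hs] at hst
  exact (sub_pos.2 hst).trans_le (mul_sub_le_conjNF (h.bddAbove_range_mul_sub t) hs.le)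

theorem conj_le_mul (h : IsNFunction ψ) {r t : ℝ} (hr : 0 < r) (ht : 0 ≤ t) (htr : t ≤ ψ r / r) :
    conjNF ψ t ≤ r * t :=
  conjNF_le fun _ hs ↦ (h.mul_sub_le_mul_abs hr hs htr).trans_eq (by rw [abs_of_nonneg ht])

theorem tendsto_conj_div_zero (h : IsNFunction ψ) :
    Tendsto (fun t ↦ conjNF ψ t / t) (𝓝[>] 0) (𝓝 0) := by
  refine (nhdsGE_basis 0).tendsto_right_iff.2 ?_ |>.mono_right nhdsWithin_le_nhds
  intro ε hε
  have hr := half_pos hε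
  filter_upwards [Ioc_mem_nhdsGT (div_pos (h.pos hr) hr)] with t ⟨ht0, ht⟩
  refine ⟨(div_pos (h.conj_pos ht0) ht0).le, ?_⟩
  rw [div_lt_iff₀ ht0]
  exact (h.conj_le_mul hr ht0.le ht).trans_lt (by gcongr; exact half_lt_self hε)

theorem conj (h : IsNFunction ψ) : IsNFunction (conjNF ψ) :=
  ⟨convexOn_conjNF (convex_Ici 0) fun t _ ↦ h.bddAbove_range_mul_sub t, h.conj_of_nonpos le_rfl,
    fun _ ht ↦ h.conj_pos ht, h.tendsto_conj_div_zero,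
    tendsto_conjNF_div_atTop (.of_forall h.bddAbove_range_mul_sub)⟩

theorem derivWithin_zero (h : IsNFunction ψ) : derivWithin ψ (Ici 0) 0 = 0 := by
  have hderiv : HasDerivWithinAt ψ 0 (Ici 0) 0 := by
    rw [hasDerivWithinAt_iff_tendsto_slope, Ici_sdiff_left]
    refine h.tendsto_div_zero.congr fun t ↦ ?_
    rw [slope_def_field, h.map_zero, sub_zero, sub_zero]
  exact hderiv.derivWithin (uniqueDiffOn_Ici 0 0 self_mem_Ici)

end IsNFunction

namespace IsRegularNFunction

variable {ψ : ℝ → ℝ}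

theorem isNFunction (h : IsRegularNFunction ψ) : IsNFunction ψ := h.1

theorem contDiffOn_Ici (h : IsRegularNFunction ψ) : ContDiffOn ℝ 1 ψ (Ici 0) := h.2.1

theorem contDiffOn_Ioi (h : IsRegularNFunction ψ) : ContDiffOn ℝ 2 ψ (Ioi 0) := h.2.2.1

theorem deriv_deriv_pos (h : IsRegularNFunction ψ) {s : ℝ} (hs : 0 < s) :
    0 < deriv (deriv ψ) s :=
  h.2.2.2 s hs

theorem hasDerivAt_deriv (h : IsRegularNFunction ψ) {s : ℝ} (hs : 0 < s) :
    HasDerivAt (deriv ψ) (deriv (deriv ψ) s) s :=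
  (differentiableAt_of_deriv_ne_zero (h.deriv_deriv_pos hs).ne').hasDerivAt

theorem continuousOn_deriv_deriv (h : IsRegularNFunction ψ) :
    ContinuousOn (deriv (deriv ψ)) (Ioi 0) :=
  (h.contDiffOn_Ioi.deriv_of_isOpen isOpen_Ioi one_add_one_eq_two.le).continuousOn_deriv_of_isOpen
    isOpen_Ioi le_rfl

theorem continuousOn_derivWithin (h : IsRegularNFunction ψ) :
    ContinuousOn (derivWithin ψ (Ici 0)) (Ici 0) :=
  h.contDiffOn_Ici.continuousOn_derivWithin (uniqueDiffOn_Ici 0) le_rfl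

theorem strictMonoOn_derivWithin (h : IsRegularNFunction ψ) :
    StrictMonoOn (derivWithin ψ (Ici 0)) (Ici 0) := by
  refine strictMonoOn_of_deriv_pos (convex_Ici 0) h.continuousOn_derivWithin fun s hs ↦ ?_
  rw [interior_Ici] at hs
  rw [(derivWithin_eventuallyEq_deriv (Ici_mem_nhds hs)).deriv_eq]
  exact h.deriv_deriv_pos hs

theorem add_derivWithin_mul_sub_le (h : IsRegularNFunction ψ) {r s : ℝ} (hr : 0 ≤ r)
    (hs : 0 ≤ s) : ψ r + derivWithin ψ (Ici 0) r * (s - r) ≤ ψ s :=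
  add_mul_sub_le_of_convexOn_of_hasDerivWithinAt h.isNFunction.convexOn hr hs
    (h.contDiffOn_Ici.differentiableOn one_ne_zero r hr).hasDerivWithinAt

theorem mapsTo_derivWithin (h : IsRegularNFunction ψ) :
    MapsTo (derivWithin ψ (Ici 0)) (Ici 0) (Ici 0) := fun _ hs ↦
  h.isNFunction.derivWithin_zero.ge.trans (h.strictMonoOn_derivWithin.monotoneOn self_mem_Ici hs hs)

theorem surjOn_derivWithin (h : IsRegularNFunction ψ) :
    SurjOn (derivWithin ψ (Ici 0)) (Ici 0) (Ici 0) := by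
  intro t (ht : 0 ≤ t)
  obtain ⟨b, hbt, hb⟩ :=
    ((h.isNFunction.tendsto_div_atTop.eventually_ge_atTop t).and (eventually_gt_atTop 0)).exists
  have hb' : t ≤ derivWithin ψ (Ici 0) b := by
    refine hbt.trans ((div_le_iff₀ hb).2 ?_)
    linarith [h.add_derivWithin_mul_sub_le hb.le le_rfl, h.isNFunction.map_zero]
  exact (intermediate_value_Icc hb.le (h.continuousOn_derivWithin.mono Icc_subset_Ici_self)).trans
    (image_mono Icc_subset_Ici_self) ⟨h.isNFunction.derivWithin_zero.trans_le ht, hb'⟩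

/-- The derivative `ψ'` as an order isomorphism of `[0,∞)`. It is taken within `[0,∞)` because the
values of `ψ` on the negative half-line are arbitrary. -/
def derivIso (h : IsRegularNFunction ψ) : Ici (0 : ℝ) ≃o Ici (0 : ℝ) :=
  StrictMono.orderIsoOfSurjective h.mapsTo_derivWithin.restrict
    (fun r s hrs ↦ h.strictMonoOn_derivWithin r.2 s.2 hrs)
    ((MapsTo.restrict_surjective_iff _).2 h.surjOn_derivWithin)

/-- The inverse `(ψ')⁻¹` of the derivative, extended by zero to the negative half-line; it is the
derivative of the conjugate `ψ*`. -/
def derivInv (h : IsRegularNFunction ψ) : ℝ → ℝ :=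
  fun t ↦ h.derivIso.symm (projIci 0 t)

theorem continuous_derivInv (h : IsRegularNFunction ψ) : Continuous h.derivInv :=
  continuous_subtype_val.comp <| h.derivIso.symm.continuous.comp <|
    (continuous_const.max continuous_id).subtype_mk _

theorem derivInv_nonneg (h : IsRegularNFunction ψ) (t : ℝ) : 0 ≤ h.derivInv t :=
  (h.derivIso.symm (projIci 0 t)).2

theorem derivWithin_derivInv (h : IsRegularNFunction ψ) (t : ℝ) :
    derivWithin ψ (Ici 0) (h.derivInv t) = max 0 t :=
  congrArg Subtype.val (h.derivIso.apply_symm_apply (projIci 0 t))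

theorem derivInv_of_nonpos (h : IsRegularNFunction ψ) {t : ℝ} (ht : t ≤ 0) : h.derivInv t = 0 :=
  h.strictMonoOn_derivWithin.injOn (h.derivInv_nonneg t) self_mem_Ici <| by
    rw [h.derivWithin_derivInv, h.isNFunction.derivWithin_zero, max_eq_left ht]

theorem derivInv_pos (h : IsRegularNFunction ψ) {t : ℝ} (ht : 0 < t) : 0 < h.derivInv t := by
  refine (h.derivInv_nonneg t).lt_of_ne fun h0 ↦ ht.not_ge ?_
  rw [← max_eq_left_iff, ← h.derivWithin_derivInv, ← h0, h.isNFunction.derivWithin_zero]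

theorem deriv_derivInv (h : IsRegularNFunction ψ) {t : ℝ} (ht : 0 < t) :
    deriv ψ (h.derivInv t) = t := by
  rw [← derivWithin_of_mem_nhds (Ici_mem_nhds (h.derivInv_pos ht)), h.derivWithin_derivInv,
    max_eq_right ht.le]

theorem isMaxOn_derivInv (h : IsRegularNFunction ψ) (t : ℝ) :
    IsMaxOn (fun s ↦ s * t - ψ s) (Ici 0) (h.derivInv t) := by
  intro s (hs : 0 ≤ s)
  have htangent := h.add_derivWithin_mul_sub_le (h.derivInv_nonneg t) hs
  rw [h.derivWithin_derivInv] at htangent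
  rw [mem_ofPred_eq]
  rcases le_total t 0 with ht | ht
  · rw [max_eq_left ht, h.derivInv_of_nonpos ht] at htangent
    rw [h.derivInv_of_nonpos ht]
    linarith [mul_nonpos_of_nonneg_of_nonpos hs ht]
  · rw [max_eq_right ht] at htangent
    linarith

theorem conj_add_derivInv_mul_sub_le (h : IsRegularNFunction ψ) (u v : ℝ) :
    conjNF ψ u + h.derivInv u * (v - u) ≤ conjNF ψ v := by
  rw [conjNF_eq_of_isMaxOn (h.derivInv_nonneg u) (h.isMaxOn_derivInv u)]
  linarith [mul_sub_le_conjNF (h.isNFunction.bddAbove_range_mul_sub v) (h.derivInv_nonneg u)]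

theorem hasDerivAt_conj (h : IsRegularNFunction ψ) (t : ℝ) :
    HasDerivAt (conjNF ψ) (h.derivInv t) t :=
  hasFDerivAt_of_continuousAt_subgradient
    (L := fun u ↦ ContinuousLinearMap.toSpanSingletonCLE (𝕜 := ℝ) (h.derivInv u))
    (fun u v ↦ by simpa [mul_comm] using h.conj_add_derivInv_mul_sub_le u v)
    (ContinuousLinearMap.toSpanSingletonCLE.continuous.comp h.continuous_derivInv).continuousAt

theorem deriv_conj (h : IsRegularNFunction ψ) : deriv (conjNF ψ) = h.derivInv :=
  funext fun t ↦ (h.hasDerivAt_conj t).deriv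

theorem hasDerivAt_derivInv (h : IsRegularNFunction ψ) {t : ℝ} (ht : 0 < t) :
    HasDerivAt h.derivInv (deriv (deriv ψ) (h.derivInv t))⁻¹ t := by
  have hpos := h.derivInv_pos ht
  refine .of_local_left_inverse h.continuous_derivInv.continuousAt (h.hasDerivAt_deriv hpos)
    (h.deriv_deriv_pos hpos).ne' ?_
  filter_upwards [Ioi_mem_nhds ht] with u hu using h.deriv_derivInv hu

theorem deriv_deriv_conj (h : IsRegularNFunction ψ) {t : ℝ} (ht : 0 < t) :
    deriv (deriv (conjNF ψ)) t = (deriv (deriv ψ) (h.derivInv t))⁻¹ := by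
  rw [h.deriv_conj, (h.hasDerivAt_derivInv ht).deriv]

theorem contDiffOn_derivInv (h : IsRegularNFunction ψ) : ContDiffOn ℝ 1 h.derivInv (Ioi 0) := by
  refine contDiffOn_succ_of_hasDerivAt (n := 0) isOpen_Ioi
    (fun t ht ↦ h.hasDerivAt_derivInv ht) (contDiffOn_zero.2 ?_)
  exact (h.continuousOn_deriv_deriv.comp h.continuous_derivInv.continuousOn
    fun t ht ↦ h.derivInv_pos ht).inv₀ fun t ht ↦ (h.deriv_deriv_pos (h.derivInv_pos ht)).ne'

theorem conj (h : IsRegularNFunction ψ) : IsRegularNFunction (conjNF ψ) := by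
  refine ⟨h.isNFunction.conj, ContDiff.contDiffOn ?_, ?_, fun t ht ↦ ?_⟩
  · exact contDiff_one_iff_deriv.2
      ⟨fun t ↦ (h.hasDerivAt_conj t).differentiableAt, h.deriv_conj ▸ h.continuous_derivInv⟩
  · exact contDiffOn_succ_of_hasDerivAt (n := 1) isOpen_Ioi
      (fun t _ ↦ h.hasDerivAt_conj t) h.contDiffOn_derivInv
  · rw [h.deriv_deriv_conj ht]
    exact inv_pos.2 (h.deriv_deriv_pos (h.derivInv_pos ht))

end IsRegularNFunction

/-- the conjugate of a balanced N-function with characteristics `(γ₁, γ₂)`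
is a balanced N-function with characteristics `(1/γ₂, 1/γ₁)`; in particular `ψ*` is
`C¹` on `[0,∞)`, `C²` on `(0,∞)` with `(ψ*)'' > 0` there, and
`(1/γ₂)·(ψ*)'(t) ≤ t·(ψ*)''(t) ≤ (1/γ₁)·(ψ*)'(t)` for all `t > 0`. -/
theorem conj_of_balanced_is_balanced (γ₁ γ₂ : ℝ) (ψ : ℝ → ℝ)
    (h : IsBalancedNFunction ψ γ₁ γ₂) :
    IsBalancedNFunction (conjNF ψ) (1 / γ₂) (1 / γ₁) := by
  obtain ⟨hψ, hγ₁, hγ₁_le, hγ₂_ge, hbalanced⟩ := h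
  have hγ₂ : 0 < γ₂ := one_pos.trans_le hγ₂_ge
  refine ⟨hψ.conj, one_div_pos.2 hγ₂, (div_le_one₀ hγ₂).2 hγ₂_ge,
    one_le_one_div hγ₁ hγ₁_le, fun t ht ↦ ?_⟩
  have hs := hψ.derivInv_pos ht
  have hdd := hψ.deriv_deriv_pos hs
  obtain ⟨hlower, hupper⟩ := hbalanced _ hs
  rw [hψ.deriv_derivInv ht] at hlower hupper
  rw [hψ.deriv_deriv_conj ht, hψ.deriv_conj, one_div_mul_eq_div, one_div_mul_eq_div,
    ← div_eq_mul_inv, div_le_div_iff₀ hγ₂ hdd, div_le_div_iff₀ hdd hγ₁]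
  exact ⟨hupper.trans_eq (mul_comm _ _), (mul_comm _ _).trans_le hlower⟩

end
end

section
/- Let φ be a balanced N-function with characteristics (γ₁, γ₂). Then the function κ : [0,∞) → [0,∞) defined by κ(t) := ∫₀ᵗ √(φ'(s)·s) ds is a balanced N-function with characteristics ((1+γ₁)/2, (1+γ₂)/2); that is, κ is a regular N-function and ((1+γ₁)/2)·κ'(t) ≤ t·κ''(t) ≤ ((1+γ₂)/2)·κ'(t) for all t > 0. -/
open Real Filter Set Topology

noncomputable section

/-! On `[0, ∞)`, the balanced N-functions are the antiderivatives vanishing at `0` of positive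
functions whose logarithmic index `t f'(t) / f(t)` lies in `[γ₁, γ₂]`, where `0 < γ₁ ≤ 1 ≤ γ₂`.
Such bounds add under products and scale under powers, so they pass from `φ'` to
`(φ'(s) s)^(1/2)` as `γ ↦ (1 + γ) / 2`. A lower bound `α` makes `f(t) t^(-α)` monotone, which
gives integrability at `0` if `α > -1`, and `f → 0` at `0` and `f → ∞` at `∞` if `α > 0`.
Integration raises both bounds by one, so `ψ(t) / t` inherits the bounds, hence the limits, of
`ψ'`. -/

/-- `f` is positive and `C¹` on `(0, ∞)` and its logarithmic index `t * f' t / f t` takes values in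
`[α, β]`, that is, `α` and `β` bound the Simonenko indices of `f`. Values of `f` outside `(0, ∞)`
are unconstrained. -/
structure HasSimonenkoBounds (f : ℝ → ℝ) (α β : ℝ) : Prop where
  contDiffOn : ContDiffOn ℝ 1 f (Ioi 0)
  pos : ∀ t > 0, 0 < f t
  mul_deriv_mem : ∀ t > 0, t * deriv f t ∈ Icc (α * f t) (β * f t)

theorem hasSimonenkoBounds_rpow (p : ℝ) : HasSimonenkoBounds (fun t => t ^ p) p p where
  contDiffOn := contDiffOn_id.rpow_const_of_ne fun t ht => ne_of_gt ht
  pos t ht := rpow_pos_of_pos ht p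
  mul_deriv_mem t ht := by
    have index_eq : t * deriv (fun t => t ^ p) t = p * t ^ p := by
      rw [Real.deriv_rpow_const, rpow_sub_one ht.ne']
      field_simp
    simp [index_eq]

namespace HasSimonenkoBounds

variable {f g : ℝ → ℝ} {α β α' β' : ℝ}

theorem hasDerivAt (hf : HasSimonenkoBounds f α β) {t : ℝ} (ht : 0 < t) :
    HasDerivAt f (deriv f t) t :=
  ((hf.contDiffOn.differentiableOn one_ne_zero).differentiableAt (Ioi_mem_nhds ht)).hasDerivAt

theorem congr (hf : HasSimonenkoBounds f α β) (hfg : EqOn g f (Ioi 0)) :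
    HasSimonenkoBounds g α β where
  contDiffOn := hf.contDiffOn.congr hfg
  pos t ht := hfg ht ▸ hf.pos t ht
  mul_deriv_mem t ht := by
    rw [hfg ht, hfg.deriv isOpen_Ioi ht]
    exact hf.mul_deriv_mem t ht

theorem mul (hf : HasSimonenkoBounds f α β) (hg : HasSimonenkoBounds g α' β') :
    HasSimonenkoBounds (fun t => f t * g t) (α + α') (β + β') where
  contDiffOn := hf.contDiffOn.mul hg.contDiffOn
  pos t ht := mul_pos (hf.pos t ht) (hg.pos t ht)
  mul_deriv_mem t ht := by
    rw [((hf.hasDerivAt ht).fun_mul (hg.hasDerivAt ht)).deriv]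
    have hft := hf.mul_deriv_mem t ht
    have hgt := hg.mul_deriv_mem t ht
    constructor
    · linarith [mul_le_mul_of_nonneg_right hft.1 (hg.pos t ht).le,
        mul_le_mul_of_nonneg_left hgt.1 (hf.pos t ht).le]
    · linarith [mul_le_mul_of_nonneg_right hft.2 (hg.pos t ht).le,
        mul_le_mul_of_nonneg_left hgt.2 (hf.pos t ht).le]

theorem mul_id (hf : HasSimonenkoBounds f α β) :
    HasSimonenkoBounds (fun t => f t * t) (α + 1) (β + 1) := by
  simpa only [rpow_one] using hf.mul (hasSimonenkoBounds_rpow 1)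

theorem div_id (hf : HasSimonenkoBounds f α β) :
    HasSimonenkoBounds (fun t => f t / t) (α - 1) (β - 1) := by
  simpa only [rpow_neg_one, ← div_eq_mul_inv, ← sub_eq_add_neg] using
    hf.mul (hasSimonenkoBounds_rpow (-1))

theorem rpow_const (hf : HasSimonenkoBounds f α β) {p : ℝ} (hp : 0 ≤ p) :
    HasSimonenkoBounds (fun t => f t ^ p) (p * α) (p * β) where
  contDiffOn := hf.contDiffOn.rpow_const_of_ne fun t ht => (hf.pos t ht).ne'
  pos t ht := rpow_pos_of_pos (hf.pos t ht) p
  mul_deriv_mem t ht := by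
    have hft := hf.pos t ht
    have rpow_eq : f t ^ p = f t ^ (p - 1) * f t := by
      rw [rpow_sub_one hft.ne', div_mul_cancel₀ _ hft.ne']
    have factor_nonneg : 0 ≤ p * f t ^ (p - 1) := mul_nonneg hp (rpow_nonneg hft.le _)
    rw [((hf.hasDerivAt ht).rpow_const (Or.inl hft.ne')).deriv, rpow_eq]
    constructor
    · linarith [mul_le_mul_of_nonneg_left (hf.mul_deriv_mem t ht).1 factor_nonneg]
    · linarith [mul_le_mul_of_nonneg_left (hf.mul_deriv_mem t ht).2 factor_nonneg]

theorem deriv_nonneg (hf : HasSimonenkoBounds f α β) (hα : 0 ≤ α) {t : ℝ} (ht : 0 < t) :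
    0 ≤ deriv f t :=
  nonneg_of_mul_nonneg_right
    ((mul_nonneg hα (hf.pos t ht).le).trans (hf.mul_deriv_mem t ht).1) ht

theorem deriv_pos (hf : HasSimonenkoBounds f α β) (hα : 0 < α) {t : ℝ} (ht : 0 < t) :
    0 < deriv f t :=
  pos_of_mul_pos_right ((mul_pos hα (hf.pos t ht)).trans_le (hf.mul_deriv_mem t ht).1) ht.le

theorem monotoneOn (hf : HasSimonenkoBounds f α β) (hα : 0 ≤ α) : MonotoneOn f (Ioi 0) := by
  refine monotoneOn_of_deriv_nonneg (convex_Ioi 0) hf.contDiffOn.continuousOn ?_ ?_ <;>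
    rw [interior_Ioi]
  · exact hf.contDiffOn.differentiableOn one_ne_zero
  · exact fun t ht => hf.deriv_nonneg hα ht

theorem mul_rpow_le_mul_rpow (hf : HasSimonenkoBounds f α β) {s t : ℝ} (hs : 0 < s)
    (hst : s ≤ t) : f s * t ^ α ≤ f t * s ^ α := by
  have ht := hs.trans_le hst
  have hmono := (hf.mul (hasSimonenkoBounds_rpow (-α))).monotoneOn (add_neg_cancel α).ge
    hs ht hst
  simp only [rpow_neg hs.le, rpow_neg ht.le, ← div_eq_mul_inv] at hmono
  rwa [div_le_div_iff₀ (rpow_pos_of_pos hs α) (rpow_pos_of_pos ht α)] at hmono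

theorem tendsto_nhdsGT_zero (hf : HasSimonenkoBounds f α β) (hα : 0 < α) :
    Tendsto f (𝓝[>] 0) (𝓝 0) := by
  have rpow_tendsto : Tendsto (fun t : ℝ => f 1 * t ^ α) (𝓝[>] 0) (𝓝 0) := by
    have hcont : Continuous fun t : ℝ => f 1 * t ^ α :=
      continuous_const.mul (continuous_rpow_const hα.le)
    simpa [zero_rpow hα.ne'] using (hcont.tendsto 0).mono_left nhdsWithin_le_nhds
  refine squeeze_zero' ?_ ?_ rpow_tendsto
  · filter_upwards [self_mem_nhdsWithin] with t ht using (hf.pos t ht).le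
  · filter_upwards [Ioc_mem_nhdsGT one_pos] with t ht
    simpa using hf.mul_rpow_le_mul_rpow ht.1 ht.2

theorem tendsto_atTop (hf : HasSimonenkoBounds f α β) (hα : 0 < α) : Tendsto f atTop atTop := by
  refine tendsto_atTop_mono' _ ?_ ((tendsto_rpow_atTop hα).const_mul_atTop (hf.pos 1 one_pos))
  filter_upwards [eventually_ge_atTop 1] with t ht
  simpa using hf.mul_rpow_le_mul_rpow one_pos ht

theorem intervalIntegrable (hf : HasSimonenkoBounds f α β) (hα : -1 < α) {t : ℝ} (ht : 0 ≤ t) :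
    IntervalIntegrable f MeasureTheory.volume 0 t := by
  have dominating : IntervalIntegrable (fun s => f t / t ^ α * s ^ α) MeasureTheory.volume 0 t :=
    (intervalIntegral.intervalIntegrable_rpow' hα).const_mul _
  refine dominating.mono_fun' ?_ ?_ <;> rw [uIoc_of_le ht]
  · exact (hf.contDiffOn.continuousOn.mono fun s hs => hs.1).aestronglyMeasurable
      measurableSet_Ioc
  · filter_upwards [MeasureTheory.ae_restrict_mem measurableSet_Ioc] with s hs
    have ht_pos : 0 < t := hs.1.trans_le hs.2
    rw [norm_of_nonneg (hf.pos s hs.1).le, div_mul_eq_mul_div,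
      le_div_iff₀ (rpow_pos_of_pos ht_pos α)]
    exact hf.mul_rpow_le_mul_rpow hs.1 hs.2

theorem hasDerivAt_integral (hf : HasSimonenkoBounds f α β) (hα : -1 < α) {t : ℝ} (ht : 0 < t) :
    HasDerivAt (fun t => ∫ s in (0 : ℝ)..t, f s) (f t) t :=
  intervalIntegral.integral_hasDerivAt_right (hf.intervalIntegrable hα ht.le)
    (hf.contDiffOn.continuousOn.stronglyMeasurableAtFilter isOpen_Ioi t ht)
    (hf.hasDerivAt ht).continuousAt

theorem continuousOn_integral (hf : HasSimonenkoBounds f α β) (hα : -1 < α) :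
    ContinuousOn (fun t => ∫ s in (0 : ℝ)..t, f s) (Ici 0) := by
  intro t ht
  have ht_succ : 0 ≤ t + 1 := add_nonneg ht zero_le_one
  have hcont := intervalIntegral.continuousOn_primitive_interval'
    (hf.intervalIntegrable hα ht_succ) left_mem_uIcc
  rw [uIcc_of_le ht_succ] at hcont
  refine (hcont t ⟨ht, by linarith⟩).mono_of_mem_nhdsWithin ?_
  exact inter_mem_nhdsWithin _ (Iic_mem_nhds (by linarith))

end HasSimonenkoBounds

section Antiderivative

variable {ψ : ℝ → ℝ} {α β : ℝ}

namespace HasSimonenkoBounds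

theorem hasDerivAt_of_deriv (hψ' : HasSimonenkoBounds (deriv ψ) α β) {t : ℝ} (ht : 0 < t) :
    HasDerivAt ψ (deriv ψ t) t :=
  (differentiableAt_of_deriv_ne_zero (hψ'.pos t ht).ne').hasDerivAt

theorem contDiffOn_two_of_deriv (hψ' : HasSimonenkoBounds (deriv ψ) α β) :
    ContDiffOn ℝ 2 ψ (Ioi 0) :=
  (contDiffOn_succ_iff_deriv_of_isOpen (n := 1) isOpen_Ioi).2
    ⟨fun _ ht => (hψ'.hasDerivAt_of_deriv ht).differentiableAt.differentiableWithinAt,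
      by simp, hψ'.contDiffOn⟩

theorem pos_of_deriv (hψ' : HasSimonenkoBounds (deriv ψ) α β)
    (hcont : ContinuousOn ψ (Ici 0)) (hψ0 : ψ 0 = 0) {t : ℝ} (ht : 0 < t) : 0 < ψ t := by
  have hmono : StrictMonoOn ψ (Ici 0) :=
    strictMonoOn_of_deriv_pos (convex_Ici 0) hcont fun s hs => hψ'.pos s (by simpa using hs)
  simpa [hψ0] using hmono self_mem_Ici ht.le ht

theorem of_deriv (hψ' : HasSimonenkoBounds (deriv ψ) α β) (hα : -1 < α)
    (hcont : ContinuousOn ψ (Ici 0)) (hψ0 : ψ 0 = 0) :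
    HasSimonenkoBounds ψ (α + 1) (β + 1) where
  contDiffOn := hψ'.contDiffOn_two_of_deriv.of_le one_le_two
  pos _ ht := hψ'.pos_of_deriv hcont hψ0 ht
  mul_deriv_mem t ht := by
    have ψ_tendsto : Tendsto ψ (𝓝[>] 0) (𝓝 0) := by
      simpa [hψ0] using (hcont 0 self_mem_Ici).tendsto.mono_left
        (nhdsWithin_mono 0 Ioi_subset_Ici_self)
    -- Some `c` in `(0, t)` satisfies `t * ψ' t / ψ t = 1 + c * ψ'' c / ψ' c`.
    obtain ⟨c, hc, ratio_eq⟩ := exists_ratio_hasDerivAt_eq_ratio_slope' ψ (deriv ψ) ht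
      (fun s => deriv ψ s * s) (fun s => deriv (deriv ψ) s * s + deriv ψ s * 1)
      (fun s hs => hψ'.hasDerivAt_of_deriv hs.1)
      (fun s hs => (hψ'.hasDerivAt hs.1).mul (hasDerivAt_id s))
      ψ_tendsto (hψ'.mul_id.tendsto_nhdsGT_zero (by linarith))
      ((hψ'.hasDerivAt_of_deriv ht).continuousAt.tendsto.mono_left nhdsWithin_le_nhds)
      ((hψ'.mul_id.hasDerivAt ht).continuousAt.tendsto.mono_left nhdsWithin_le_nhds)
    have hψt := hψ'.pos_of_deriv hcont hψ0 ht
    have hψ'c := hψ'.pos c hc.1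
    obtain ⟨lower, upper⟩ := hψ'.mul_deriv_mem c hc.1
    constructor <;> refine le_of_mul_le_mul_right ?_ hψ'c
    · linarith [mul_le_mul_of_nonneg_left lower hψt.le]
    · linarith [mul_le_mul_of_nonneg_left upper hψt.le]

theorem convexOn_of_deriv (hψ' : HasSimonenkoBounds (deriv ψ) α β) (hα : 0 ≤ α)
    (hcont : ContinuousOn ψ (Ici 0)) : ConvexOn ℝ (Ici 0) ψ := by
  refine MonotoneOn.convexOn_of_deriv (convex_Ici 0) hcont ?_ ?_ <;> rw [interior_Ici]
  · exact hψ'.contDiffOn_two_of_deriv.differentiableOn two_ne_zero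
  · exact hψ'.monotoneOn hα

theorem contDiffOn_one_of_deriv (hψ' : HasSimonenkoBounds (deriv ψ) α β) (hα : 0 < α)
    (hcont : ContinuousOn ψ (Ici 0)) : ContDiffOn ℝ 1 ψ (Ici 0) := by
  have deriv_tendsto := hψ'.tendsto_nhdsGT_zero hα
  have hasDerivWithinAt_zero : HasDerivWithinAt ψ 0 (Ici 0) 0 :=
    hasDerivWithinAt_Ici_of_tendsto_deriv
      (hψ'.contDiffOn_two_of_deriv.differentiableOn two_ne_zero)
      ((hcont 0 self_mem_Ici).mono Ioi_subset_Ici_self) self_mem_nhdsWithin deriv_tendsto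
  have derivWithin_eq : EqOn (derivWithin ψ (Ici 0)) (deriv ψ) (Ioi 0) := fun t ht =>
    derivWithin_of_mem_nhds (Ici_mem_nhds ht)
  refine (contDiffOn_one_iff_derivWithin (uniqueDiffOn_Ici 0)).2 ⟨?_, ?_⟩ <;>
    rintro t (ht : 0 ≤ t) <;> obtain rfl | ht := ht.eq_or_lt
  · exact hasDerivWithinAt_zero.differentiableWithinAt
  · exact (hψ'.hasDerivAt_of_deriv ht).differentiableAt.differentiableWithinAt
  · rw [← continuousWithinAt_Ioi_iff_Ici, ContinuousWithinAt,
      hasDerivWithinAt_zero.derivWithin (uniqueDiffOn_Ici 0 0 self_mem_Ici)]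
    exact deriv_tendsto.congr' (derivWithin_eq.symm.eventuallyEq_of_mem self_mem_nhdsWithin)
  · exact ((hψ'.hasDerivAt ht).continuousAt.congr
      (derivWithin_eq.symm.eventuallyEq_of_mem (Ioi_mem_nhds ht))).continuousWithinAt

theorem isNFunction_of_deriv (hψ' : HasSimonenkoBounds (deriv ψ) α β) (hα : 0 < α)
    (hcont : ContinuousOn ψ (Ici 0)) (hψ0 : ψ 0 = 0) : IsNFunction ψ := by
  have hψ_div : HasSimonenkoBounds (fun t => ψ t / t) α β := by
    simpa only [add_sub_cancel_right] using (hψ'.of_deriv (by linarith) hcont hψ0).div_id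
  exact ⟨hψ'.convexOn_of_deriv hα.le hcont, hψ0, fun _ ht => hψ'.pos_of_deriv hcont hψ0 ht,
    hψ_div.tendsto_nhdsGT_zero hα, hψ_div.tendsto_atTop hα⟩

theorem isBalancedNFunction_of_deriv (hψ' : HasSimonenkoBounds (deriv ψ) α β) (hα : 0 < α)
    (hα₁ : α ≤ 1) (hβ : 1 ≤ β) (hcont : ContinuousOn ψ (Ici 0)) (hψ0 : ψ 0 = 0) :
    IsBalancedNFunction ψ α β :=
  ⟨⟨hψ'.isNFunction_of_deriv hα hcont hψ0, hψ'.contDiffOn_one_of_deriv hα hcont,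
    hψ'.contDiffOn_two_of_deriv, fun _ ht => hψ'.deriv_pos hα ht⟩, hα, hα₁, hβ,
    hψ'.mul_deriv_mem⟩

end HasSimonenkoBounds

theorem IsBalancedNFunction.hasSimonenkoBounds_deriv (h : IsBalancedNFunction ψ α β) :
    HasSimonenkoBounds (deriv ψ) α β := by
  obtain ⟨⟨-, -, hC2, deriv2_pos⟩, -, -, hβ, balance⟩ := h
  exact
    { contDiffOn := ((contDiffOn_succ_iff_deriv_of_isOpen (n := 1) isOpen_Ioi).1 hC2).2.2
      pos := fun t ht => pos_of_mul_pos_right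
        ((mul_pos ht (deriv2_pos t ht)).trans_le (balance t ht).2) (zero_le_one.trans hβ)
      mul_deriv_mem := balance }

end Antiderivative

theorem HasSimonenkoBounds.isBalancedNFunction_integral {f : ℝ → ℝ} {α β : ℝ}
    (hf : HasSimonenkoBounds f α β) (hα : 0 < α) (hα₁ : α ≤ 1) (hβ : 1 ≤ β) :
    IsBalancedNFunction (fun t => ∫ s in (0 : ℝ)..t, f s) α β := by
  have neg_one_lt : -1 < α := by linarith
  have deriv_bounds : HasSimonenkoBounds (deriv fun t => ∫ s in (0 : ℝ)..t, f s) α β :=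
    hf.congr fun _ ht => (hf.hasDerivAt_integral neg_one_lt ht).deriv
  exact deriv_bounds.isBalancedNFunction_of_deriv hα hα₁ hβ (hf.continuousOn_integral neg_one_lt)
    intervalIntegral.integral_same

theorem potential_kappa_balanced_general {γ₁ γ₂ : ℝ} {φ : ℝ → ℝ}
    (hφ' : HasSimonenkoBounds (deriv φ) γ₁ γ₂) (hγ₁ : -1 < γ₁) (hγ₁' : γ₁ ≤ 1) (hγ₂ : 1 ≤ γ₂) :
    IsBalancedNFunction (fun t => ∫ s in (0 : ℝ)..t, √(deriv φ s * s))
      ((1 + γ₁) / 2) ((1 + γ₂) / 2) := by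
  have sqrt_bounds : HasSimonenkoBounds (fun s => √(deriv φ s * s))
      ((1 + γ₁) / 2) ((1 + γ₂) / 2) := by
    have half_eq (γ : ℝ) : (1 + γ) / 2 = 1 / 2 * (γ + 1) := by ring
    simp only [sqrt_eq_rpow, half_eq]
    exact hφ'.mul_id.rpow_const one_half_pos.le
  exact sqrt_bounds.isBalancedNFunction_integral (by linarith) (by linarith) (by linarith)

/-- for a balanced N-function `φ` with characteristics `(γ₁, γ₂)`, the
potential `κ(t) = ∫₀ᵗ √(φ'(s)·s) ds` is a balanced N-function with characteristics
`((1+γ₁)/2, (1+γ₂)/2)`. -/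
theorem potential_kappa_balanced (γ₁ γ₂ : ℝ) (φ : ℝ → ℝ)
    (h : IsBalancedNFunction φ γ₁ γ₂) :
    IsBalancedNFunction (fun t => ∫ s in (0:ℝ)..t, Real.sqrt (deriv φ s * s))
      ((1 + γ₁) / 2) ((1 + γ₂) / 2) := by
  obtain ⟨hγ₁, hγ₁', hγ₂, -⟩ := h.2
  exact potential_kappa_balanced_general h.hasSimonenkoBounds_deriv (by linarith) hγ₁' hγ₂

end
end

section
/- Let ψ be a regular N-function such that both ψ and its conjugate ψ* satisfy the Δ₂-condition. Then the family of shifted N-functions ψ_a, a ≥ 0, satisfies the Δ₂-condition uniformly in a: there exists a constant K > 2, depending only on Δ₂(ψ), such that ψ_a(2t) ≤ K·ψ_a(t) for all t ≥ 0 and all a ≥ 0. -/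
open Real Filter Set Topology

noncomputable section

/-!
Comparing `ψ` with its tangents gives `ψ x ≤ x ψ'(x)` and `x ψ'(x) ≤ ψ(2x)`, so Δ₂ for `ψ` passes
to its derivative: `2x ψ'(2x) ≤ ψ(4x) ≤ K² ψ(x) ≤ K² x ψ'(x)`. As `ψ'` is increasing and
`a + 2s ≤ 2(a + s)`, the density `ψ'(a+s) s / (a+s)` of `ψ_a` inherits this doubling with the same
constant for every shift `a`, and integrating it costs only one more factor `2`.
-/

variable {ψ : ℝ → ℝ} {K : ℝ}

lemma two_mul_le_apply_two_mul_of_convexOn (hψ : ConvexOn ℝ (Ici 0) ψ) (hψ0 : ψ 0 = 0) {x : ℝ}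
    (hx : 0 ≤ x) : 2 * ψ x ≤ ψ (2 * x) := by
  have hmid := hψ.2 (mem_Ici.2 le_rfl) (mem_Ici.2 (show 0 ≤ 2 * x by positivity))
    (show (0 : ℝ) ≤ 1 / 2 by norm_num) (show (0 : ℝ) ≤ 1 / 2 by norm_num) (by norm_num)
  simp only [smul_eq_mul, hψ0, mul_zero, zero_add, one_div, inv_mul_cancel_left₀ (two_ne_zero' ℝ)]
    at hmid
  linarith

lemma le_mul_deriv_of_convexOn (hψ : ConvexOn ℝ (Ici 0) ψ) (hψ0 : ψ 0 = 0) {x : ℝ} (hx : 0 < x)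
    (hd : DifferentiableAt ℝ ψ x) : ψ x ≤ x * deriv ψ x := by
  have hslope := hψ.slope_le_deriv (mem_Ici.2 le_rfl) (mem_Ici.2 hx.le) hx hd
  rwa [slope_def_field, hψ0, sub_zero, sub_zero, div_le_iff₀' hx] at hslope

lemma mul_deriv_le_sub_of_convexOn (hψ : ConvexOn ℝ (Ici 0) ψ) {x : ℝ} (hx : 0 < x)
    (hd : DifferentiableAt ℝ ψ x) : x * deriv ψ x ≤ ψ (2 * x) - ψ x := by
  have hlt : x < 2 * x := by linarith
  have hslope := hψ.deriv_le_slope (mem_Ici.2 hx.le) (mem_Ici.2 (hx.trans hlt).le) hlt hd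
  rwa [slope_def_field, two_mul, add_sub_cancel_right, ← two_mul, le_div_iff₀' hx] at hslope

namespace SatisfiesDelta2

lemma nonneg (hK : SatisfiesDelta2 ψ K) (hψ : ConvexOn ℝ (Ici 0) ψ) (hψ0 : ψ 0 = 0) {x : ℝ}
    (hx : 0 ≤ x) : 0 ≤ ψ x := by
  have hle : 2 * ψ x ≤ K * ψ x :=
    (two_mul_le_apply_two_mul_of_convexOn hψ hψ0 hx).trans (hK.2 x hx)
  exact nonneg_of_mul_nonneg_right (by linarith : 0 ≤ (K - 2) * ψ x) (sub_pos.2 hK.1)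

lemma deriv_nonneg (hK : SatisfiesDelta2 ψ K) (hψ : ConvexOn ℝ (Ici 0) ψ) (hψ0 : ψ 0 = 0) {x : ℝ}
    (hx : 0 < x) (hd : DifferentiableAt ℝ ψ x) : 0 ≤ deriv ψ x :=
  nonneg_of_mul_nonneg_right
    ((hK.nonneg hψ hψ0 hx.le).trans (le_mul_deriv_of_convexOn hψ hψ0 hx hd)) hx

lemma apply_four_mul_le (hK : SatisfiesDelta2 ψ K) {x : ℝ} (hx : 0 ≤ x) :
    ψ (2 * (2 * x)) ≤ K ^ 2 * ψ x := by
  have hK0 : 0 ≤ K := zero_le_two.trans hK.1.le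
  calc ψ (2 * (2 * x)) ≤ K * ψ (2 * x) := hK.2 _ (by positivity)
    _ ≤ K * (K * ψ x) := by gcongr; exact hK.2 x hx
    _ = K ^ 2 * ψ x := by ring

lemma two_mul_deriv_two_mul_le (hK : SatisfiesDelta2 ψ K) (hψ : ConvexOn ℝ (Ici 0) ψ)
    (hψ0 : ψ 0 = 0) {x : ℝ} (hx : 0 < x) (hd : DifferentiableAt ℝ ψ x)
    (hd₂ : DifferentiableAt ℝ ψ (2 * x)) : 2 * deriv ψ (2 * x) ≤ K ^ 2 * deriv ψ x := by
  have h2x : 0 < 2 * x := by positivity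
  refine le_of_mul_le_mul_left ?_ hx
  calc x * (2 * deriv ψ (2 * x)) = 2 * x * deriv ψ (2 * x) := by ring
    _ ≤ ψ (2 * (2 * x)) - ψ (2 * x) := mul_deriv_le_sub_of_convexOn hψ h2x hd₂
    _ ≤ ψ (2 * (2 * x)) := sub_le_self _ (hK.nonneg hψ hψ0 h2x.le)
    _ ≤ K ^ 2 * ψ x := hK.apply_four_mul_le hx.le
    _ ≤ K ^ 2 * (x * deriv ψ x) := by gcongr; exact le_mul_deriv_of_convexOn hψ hψ0 hx hd
    _ = x * (K ^ 2 * deriv ψ x) := by ring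

end SatisfiesDelta2

lemma monotoneOn_shiftDF (hmono : MonotoneOn (deriv ψ) (Ioi 0)) (hnn : ∀ x > 0, 0 ≤ deriv ψ x)
    {a : ℝ} (ha : 0 ≤ a) : MonotoneOn (shiftDF ψ a) (Ici 0) := by
  intro s hs t ht hst
  rw [mem_Ici] at hs ht
  obtain rfl | hs := hs.eq_or_lt
  · obtain rfl | ht := ht.eq_or_lt
    · rfl
    have := hnn (a + t) (by positivity)
    simp only [shiftDF, mul_zero, zero_div]
    positivity
  have has : 0 < a + s := by positivity
  have hat : 0 < a + t := by linarith
  have hderiv : deriv ψ (a + s) ≤ deriv ψ (a + t) := hmono has hat (by gcongr)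
  have hfrac : s / (a + s) ≤ t / (a + t) := by
    rw [div_le_div_iff₀ has hat]
    nlinarith
  simp only [shiftDF, mul_div_assoc]
  exact mul_le_mul hderiv hfrac (by positivity) (hnn _ hat)

lemma shiftDF_two_mul_le (hmono : MonotoneOn (deriv ψ) (Ioi 0)) (hnn : ∀ x > 0, 0 ≤ deriv ψ x)
    {C : ℝ} (hC : ∀ x > 0, 2 * deriv ψ (2 * x) ≤ C * deriv ψ x) {a : ℝ} (ha : 0 ≤ a) {s : ℝ}
    (hs : 0 ≤ s) : shiftDF ψ a (2 * s) ≤ C * shiftDF ψ a s := by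
  obtain rfl | hs := hs.eq_or_lt
  · simp [shiftDF]
  have has : 0 < a + s := by positivity
  have ha2s : 0 < a + 2 * s := by positivity
  have hnn' : 0 ≤ deriv ψ (a + 2 * s) := hnn _ ha2s
  have hderiv : 2 * deriv ψ (a + 2 * s) ≤ C * deriv ψ (a + s) :=
    calc 2 * deriv ψ (a + 2 * s) ≤ 2 * deriv ψ (2 * (a + s)) := by
          gcongr
          exact hmono ha2s (mul_pos two_pos has) (by linarith)
      _ ≤ C * deriv ψ (a + s) := hC _ has
  calc shiftDF ψ a (2 * s) = 2 * deriv ψ (a + 2 * s) * s / (a + 2 * s) := by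
        rw [shiftDF]; ring
    _ ≤ 2 * deriv ψ (a + 2 * s) * s / (a + s) := by gcongr; linarith
    _ ≤ C * deriv ψ (a + s) * s / (a + s) := by gcongr
    _ = C * shiftDF ψ a s := by rw [shiftDF]; ring

lemma integral_zero_two_mul_le {f : ℝ → ℝ} {C t : ℝ} (ht : 0 ≤ t)
    (hf : IntervalIntegrable f MeasureTheory.volume 0 (2 * t))
    (hC : ∀ s ∈ Icc 0 t, f (2 * s) ≤ C * f s) :
    ∫ s in (0 : ℝ)..2 * t, f s ≤ 2 * C * ∫ s in (0 : ℝ)..t, f s := by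
  have hft : IntervalIntegrable f MeasureTheory.volume 0 t :=
    hf.mono_set (uIcc_subset_uIcc_left (mem_uIcc_of_le ht (by linarith)))
  have hf₂ : IntervalIntegrable (fun s ↦ f (2 * s)) MeasureTheory.volume 0 t := by
    simpa using hf.comp_mul_left (c := 2)
  calc ∫ s in (0 : ℝ)..2 * t, f s = 2 * ∫ s in (0 : ℝ)..t, f (2 * s) := by
        rw [intervalIntegral.mul_integral_comp_mul_left, mul_zero]
    _ ≤ 2 * ∫ s in (0 : ℝ)..t, C * f s := by
        gcongr
        exact intervalIntegral.integral_mono_on ht hf₂ (hft.const_mul C) hC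
    _ = 2 * C * ∫ s in (0 : ℝ)..t, f s := by
        rw [intervalIntegral.integral_const_mul, mul_assoc]

theorem shifted_delta2_uniform_general (hψ : ConvexOn ℝ (Ici 0) ψ) (hψ0 : ψ 0 = 0)
    (hd : DifferentiableOn ℝ ψ (Ioi 0)) (hK : SatisfiesDelta2 ψ K) {a : ℝ} (ha : 0 ≤ a) :
    SatisfiesDelta2 (shiftNF ψ a) (2 * K ^ 2) := by
  have hdiff : ∀ x > 0, DifferentiableAt ℝ ψ x := fun x hx ↦ hd.differentiableAt (Ioi_mem_nhds hx)
  have hmono : MonotoneOn (deriv ψ) (Ioi 0) :=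
    (hψ.subset Ioi_subset_Ici_self (convex_Ioi 0)).monotoneOn_deriv hdiff
  have hnn : ∀ x > 0, 0 ≤ deriv ψ x := fun x hx ↦ hK.deriv_nonneg hψ hψ0 hx (hdiff x hx)
  have hdoubling : ∀ x > 0, 2 * deriv ψ (2 * x) ≤ K ^ 2 * deriv ψ x := fun x hx ↦
    hK.two_mul_deriv_two_mul_le hψ hψ0 hx (hdiff x hx) (hdiff _ (mul_pos two_pos hx))
  refine ⟨by nlinarith [hK.1], fun t ht ↦ integral_zero_two_mul_le ht ?_ fun s hs ↦
    shiftDF_two_mul_le hmono hnn hdoubling ha hs.1⟩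
  refine ((monotoneOn_shiftDF hmono hnn ha).mono ?_).intervalIntegrable
  rw [uIcc_of_le (by positivity)]
  exact Icc_subset_Ici_self

/-- the shifted N-functions `ψ_a`, `a ≥ 0`, satisfy the Δ₂-condition
uniformly in `a`, with constant depending only on the Δ₂-constant of `ψ`. -/
theorem shifted_delta2_uniform (K₁ : ℝ) :
    ∃ K > (2:ℝ), ∀ ψ : ℝ → ℝ, ∀ K₂ : ℝ, IsRegularNFunction ψ →
      SatisfiesDelta2 ψ K₁ → SatisfiesDelta2 (conjNF ψ) K₂ →
      ∀ a ≥ (0:ℝ), ∀ t ≥ (0:ℝ), shiftNF ψ a (2 * t) ≤ K * shiftNF ψ a t := by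
  refine ⟨2 * max K₁ 2 ^ 2, by nlinarith [le_max_right K₁ 2], fun ψ _ hψ hK _ a ha ↦ ?_⟩
  obtain ⟨⟨hconv, hψ0, -⟩, -, hC2, -⟩ := hψ
  rw [max_eq_left hK.1.le]
  exact (shifted_delta2_uniform_general hconv hψ0 (hC2.differentiableOn two_ne_zero) hK ha).2

end
end
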